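/- Let X be a real Banach space and let C, D ⊆ X be nonempty convex sets such that C is compact and D is simultaneously weakly strongly proximinal. Then C + D is simultaneously weakly strongly proximinal. -/

import Mathlib

/-!
The set `C + D` is the union of the translates `c +ᵥ D`, `c ∈ C`, and each of them inherits the
approximation properties of `D`. The distance from `A` to `c +ᵥ D` is a `1`-Lipschitz function of
`c`, so it attains its minimum on `C`, and this minimum is the distance from `A` to `C + D`.
Hence `C + D` is simultaneously proximinal.

If `c₀ +ᵥ D` is farther from `A` than `C + D`, then no `c +ᵥ D` with `c` near `c₀` meets
`P_{C+D}(A, δ)` for small `δ`. Otherwise `P_{c₀+D}(A) ⊆ P_{C+D}(A)`, and a translation by `c₀ - c`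
takes `(c +ᵥ D) ∩ P_{C+D}(A, δ)` into some `P_{c₀+D}(A, δ₀)`, which is weakly close to
`P_{c₀+D}(A)`. Both are statements about all `c` near `c₀` and all small `δ`, so compactness of `C`
provides a `δ` that works for every `c`.
-/

open Filter Topology Pointwise

variable {X : Type*} [NormedAddCommGroup X] [NormedSpace ℝ X]

/-- `simSup A y = sup_{a ∈ A} ‖a - y‖`. -/
noncomputable def simSup (A : Set X) (y : X) : ℝ := ⨆ a : A, ‖(a : X) - y‖

/-- `simDist A C = inf_{y ∈ C} sup_{a ∈ A} ‖a - y‖`. -/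
noncomputable def simDist (A C : Set X) : ℝ := ⨅ y : C, simSup A (y : X)

/-- The set of best simultaneous approximations `P_C(A)`. -/
def simBest (A C : Set X) : Set X := {y | y ∈ C ∧ simSup A y = simDist A C}

/-- The set `P_C(A, δ)`. -/
def simBestApprox (A C : Set X) (δ : ℝ) : Set X :=
  {y | y ∈ C ∧ simSup A y < simDist A C + δ}

/-- `C` is simultaneously proximinal. -/
def SimProximinal (C : Set X) : Prop :=
  ∀ A : Set X, A.Nonempty → Bornology.IsBounded A → (simBest A C).Nonempty

/-- `y` is a minimizing sequence in `C` for `A`. -/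
def IsMinimizing (A C : Set X) (y : ℕ → X) : Prop :=
  (∀ n, y n ∈ C) ∧ Tendsto (fun n => simSup A (y n)) atTop (𝓝 (simDist A C))

/-- Weak convergence of a sequence. -/
def WeakTendsto (y : ℕ → X) (c : X) : Prop :=
  ∀ f : X →L[ℝ] ℝ, Tendsto (fun n => f (y n)) atTop (𝓝 (f c))

/-- `C` is simultaneously approximatively compact. -/
def SimApproxCompact (C : Set X) : Prop :=
  ∀ A : Set X, A.Nonempty → Bornology.IsBounded A → ∀ y : ℕ → X, IsMinimizing A C y →
    ∃ c ∈ C, ∃ φ : ℕ → ℕ, StrictMono φ ∧ Tendsto (y ∘ φ) atTop (𝓝 c)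

/-- `C` is simultaneously approximatively weakly compact. -/
def SimApproxWeakCompact (C : Set X) : Prop :=
  ∀ A : Set X, A.Nonempty → Bornology.IsBounded A → ∀ y : ℕ → X, IsMinimizing A C y →
    ∃ c ∈ C, ∃ φ : ℕ → ℕ, StrictMono φ ∧ WeakTendsto (y ∘ φ) c

/-- `C` is simultaneously strongly proximinal. -/
def SimStronglyProximinal (C : Set X) : Prop :=
  SimProximinal C ∧ ∀ A : Set X, A.Nonempty → Bornology.IsBounded A → ∀ ε > (0 : ℝ),
    ∃ δ > (0 : ℝ), simBestApprox A C δ ⊆ simBest A C + Metric.closedBall (0 : X) ε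

/-- `C` is simultaneously weakly strongly proximinal. -/
def SimWeakStronglyProximinal (C : Set X) : Prop :=
  SimProximinal C ∧ ∀ A : Set X, A.Nonempty → Bornology.IsBounded A →
    ∀ V : Set X, V ∈ 𝓝 (0 : WeakSpace ℝ X) → ∃ δ > (0 : ℝ),
      simBestApprox A C δ ⊆ simBest A C + V

section Metric

variable {E : Type*} [NormedAddCommGroup E] {A C D : Set E} {y : E}

lemma simSup_nonneg (A : Set E) (y : E) : 0 ≤ simSup A y :=
  Real.iSup_nonneg fun _ => norm_nonneg _

lemma norm_sub_le_simSup (hA : Bornology.IsBounded A) {a : E} (ha : a ∈ A) (y : E) :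
    ‖a - y‖ ≤ simSup A y := by
  obtain ⟨R, hR⟩ := hA.exists_norm_le
  have hbdd : BddAbove (Set.range fun a : A => ‖(a : E) - y‖) := by
    refine ⟨R + ‖y‖, ?_⟩
    rintro _ ⟨b, rfl⟩
    exact (norm_sub_le _ _).trans (by gcongr; exact hR b b.2)
  exact le_ciSup hbdd ⟨a, ha⟩

lemma simSup_le_add_dist (hA : Bornology.IsBounded A) (y z : E) :
    simSup A y ≤ simSup A z + dist y z := by
  refine Real.iSup_le (fun a => ?_) (add_nonneg (simSup_nonneg A z) dist_nonneg)
  calc ‖(a : E) - y‖ ≤ ‖(a : E) - z‖ + ‖z - y‖ := norm_sub_le_norm_sub_add_norm_sub _ _ _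
    _ ≤ simSup A z + dist y z := by
      rw [dist_eq_norm_sub']
      gcongr
      exact norm_sub_le_simSup hA a.2 z

lemma simDist_le_simSup (A : Set E) (hy : y ∈ C) : simDist A C ≤ simSup A y :=
  ciInf_le (f := fun z : C => simSup A z)
    ⟨0, Set.forall_mem_range.2 fun z => simSup_nonneg A z⟩ ⟨y, hy⟩

lemma le_simDist (hC : C.Nonempty) {r : ℝ} (h : ∀ y ∈ C, r ≤ simSup A y) : r ≤ simDist A C :=
  have := hC.to_subtype
  le_ciInf fun y => h y y.2

lemma simDist_anti (A : Set E) (hC : C.Nonempty) (hCD : C ⊆ D) : simDist A D ≤ simDist A C :=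
  le_simDist hC fun _ hy => simDist_le_simSup A (hCD hy)

lemma simBest_subset_simBest (hCD : C ⊆ D) (h : simDist A C ≤ simDist A D) :
    simBest A C ⊆ simBest A D := fun _ hy =>
  ⟨hCD hy.1, (hy.2.trans_le h).antisymm (simDist_le_simSup A (hCD hy.1))⟩

lemma simSup_vadd (c : E) (A : Set E) (y : E) : simSup (c +ᵥ A) (c +ᵥ y) = simSup A y := by
  have simSup_eq (A : Set E) (y : E) : simSup A y = sSup ((fun a => ‖a - y‖) '' A) :=
    (sSup_image' (f := fun a => ‖a - y‖)).symm
  simp only [simSup_eq, ← Set.image_vadd, Set.image_image, vadd_eq_add, add_sub_add_left_eq_sub]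

lemma simDist_vadd (c : E) (A C : Set E) : simDist (c +ᵥ A) (c +ᵥ C) = simDist A C := by
  simp only [simDist, ← sInf_image', ← Set.image_vadd (t := C), Set.image_image, simSup_vadd]

lemma simBest_vadd (c : E) (A C : Set E) : simBest (c +ᵥ A) (c +ᵥ C) = c +ᵥ simBest A C := by
  ext y
  obtain ⟨z, rfl⟩ : ∃ z, y = c +ᵥ z := ⟨-c +ᵥ y, (vadd_neg_vadd c y).symm⟩
  simp only [simBest, Set.mem_ofPred_eq, Set.vadd_mem_vadd_set_iff, simSup_vadd, simDist_vadd]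

lemma simBestApprox_vadd (c : E) (A C : Set E) (δ : ℝ) :
    simBestApprox (c +ᵥ A) (c +ᵥ C) δ = c +ᵥ simBestApprox A C δ := by
  ext y
  obtain ⟨z, rfl⟩ : ∃ z, y = c +ᵥ z := ⟨-c +ᵥ y, (vadd_neg_vadd c y).symm⟩
  simp only [simBestApprox, Set.mem_ofPred_eq, Set.vadd_mem_vadd_set_iff, simSup_vadd, simDist_vadd]

lemma SimProximinal.nonempty (hC : SimProximinal C) : C.Nonempty :=
  (hC {0} (Set.singleton_nonempty 0) Bornology.isBounded_singleton).mono fun _ hy => hy.1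

lemma SimProximinal.vadd (hC : SimProximinal C) (c : E) : SimProximinal (c +ᵥ C) := by
  intro A hA hAb
  rw [← vadd_neg_vadd c A, simBest_vadd]
  exact (hC (-c +ᵥ A) hA.vadd_set (hAb.vadd (-c))).vadd_set

lemma simDist_vadd_le_add_dist (hA : Bornology.IsBounded A) (hD : D.Nonempty) (c c' : E) :
    simDist A (c +ᵥ D) ≤ simDist A (c' +ᵥ D) + dist c c' := by
  rw [← sub_le_iff_le_add]
  refine le_simDist hD.vadd_set (Set.forall_mem_image.2 fun d hd => ?_)
  rw [sub_le_iff_le_add]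
  calc simDist A (c +ᵥ D) ≤ simSup A (c +ᵥ d) := simDist_le_simSup A (Set.vadd_mem_vadd_set hd)
    _ ≤ simSup A (c' +ᵥ d) + dist (c +ᵥ d) (c' +ᵥ d) := simSup_le_add_dist hA _ _
    _ = simSup A (c' +ᵥ d) + dist c c' := by simp only [vadd_eq_add, dist_add_right]

lemma continuous_simDist_vadd (hA : Bornology.IsBounded A) (hD : D.Nonempty) :
    Continuous fun c : E => simDist A (c +ᵥ D) :=
  (LipschitzWith.of_le_add (simDist_vadd_le_add_dist hA hD)).continuous

lemma exists_simDist_vadd_eq_simDist_add (hC : IsCompact C) (hCne : C.Nonempty)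
    (hD : D.Nonempty) (hA : Bornology.IsBounded A) :
    ∃ c ∈ C, simDist A (c +ᵥ D) = simDist A (C + D) := by
  obtain ⟨c, hc, hmin⟩ := hC.exists_isMinOn hCne (continuous_simDist_vadd hA hD).continuousOn
  refine ⟨c, hc, le_antisymm (le_simDist (hCne.add hD) ?_)
    (simDist_anti A hD.vadd_set (Set.vadd_set_subset_add hc))⟩
  rintro _ ⟨c', hc', d, hd, rfl⟩
  exact (hmin hc').trans (simDist_le_simSup A (Set.vadd_mem_vadd_set hd))

lemma SimProximinal.compact_add (hD : SimProximinal D) (hC : IsCompact C) (hCne : C.Nonempty) :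
    SimProximinal (C + D) := by
  intro A hA hAb
  obtain ⟨c, hc, hdist⟩ := exists_simDist_vadd_eq_simDist_add hC hCne hD.nonempty hAb
  exact (hD.vadd c A hA hAb).mono (simBest_subset_simBest (Set.vadd_set_subset_add hc) hdist.le)

lemma eventually_disjoint_vadd_simBestApprox (hA : Bornology.IsBounded A) (hD : D.Nonempty)
    {c₀ : E} (h : simDist A C < simDist A (c₀ +ᵥ D)) :
    ∀ᶠ p : ℝ × E in 𝓝 (0, c₀), Disjoint (p.2 +ᵥ D) (simBestApprox A C p.1) := by
  have hcont : Continuous fun p : ℝ × E => simDist A (p.2 +ᵥ D) :=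
    (continuous_simDist_vadd hA hD).comp continuous_snd
  have hlt : ∀ᶠ p : ℝ × E in 𝓝 (0, c₀), simDist A C + p.1 < simDist A (p.2 +ᵥ D) :=
    (continuous_const.add continuous_fst).continuousAt.eventually_lt hcont.continuousAt (by simpa)
  filter_upwards [hlt] with p hp
  exact Set.disjoint_left.2 fun y hyD hy =>
    (hp.trans_le (simDist_le_simSup A hyD)).not_gt hy.2

end Metric

-- `WeakSpace ℝ X` is a type synonym of `X`, so both sides are filters on `X`.
lemma nhds_zero_le_nhds_zero_weakSpace : 𝓝 (0 : X) ≤ 𝓝 (0 : WeakSpace ℝ X) :=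
  (toWeakSpaceCLM ℝ X).continuous.tendsto' 0 0 (map_zero _)

namespace SimWeakStronglyProximinal

variable {A C D V : Set X} {c₀ : X}

lemma vadd (hC : SimWeakStronglyProximinal C) (c : X) : SimWeakStronglyProximinal (c +ᵥ C) := by
  refine ⟨hC.1.vadd c, fun A hA hAb V hV => ?_⟩
  obtain ⟨δ, hδ, hsub⟩ := hC.2 (-c +ᵥ A) hA.vadd_set (hAb.vadd (-c)) V hV
  refine ⟨δ, hδ, ?_⟩
  rw [← vadd_neg_vadd c A, simBestApprox_vadd, simBest_vadd, vadd_add_assoc]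
  exact Set.vadd_set_mono hsub

lemma eventually_vadd_inter_simBestApprox_subset_of_simDist_le
    (hD : SimWeakStronglyProximinal D) (hA : A.Nonempty) (hAb : Bornology.IsBounded A)
    (hV : V ∈ 𝓝 (0 : WeakSpace ℝ X)) (hsub : c₀ +ᵥ D ⊆ C)
    (hdist : simDist A (c₀ +ᵥ D) ≤ simDist A C) :
    ∀ᶠ p : ℝ × X in 𝓝 (0, c₀), (p.2 +ᵥ D) ∩ simBestApprox A C p.1 ⊆ simBest A C + V := by
  obtain ⟨W, hW, hWV⟩ := exists_nhds_zero_half (M := WeakSpace ℝ X) hV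
  obtain ⟨δ₀, hδ₀, hδ₀W⟩ := (hD.vadd c₀).2 A hA hAb W hW
  have hshift : ∀ᶠ p : ℝ × X in 𝓝 (0, c₀), p.2 - c₀ ∈ W :=
    (continuous_snd.sub continuous_const).tendsto' _ 0 (sub_self c₀)
      (nhds_zero_le_nhds_zero_weakSpace hW)
  have hsmall : ∀ᶠ p : ℝ × X in 𝓝 (0, c₀), p.1 + dist c₀ p.2 < δ₀ :=
    (continuous_fst.add (continuous_const.dist continuous_snd)).continuousAt.eventually_lt_const
      (by simpa using hδ₀)
  filter_upwards [hshift, hsmall] with ⟨δ, c⟩ hcW hδ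
  rintro _ ⟨⟨d, hd, rfl⟩, -, hlt⟩
  have hmem : c₀ +ᵥ d ∈ simBestApprox A (c₀ +ᵥ D) δ₀ := by
    refine ⟨Set.vadd_mem_vadd_set hd, ?_⟩
    calc simSup A (c₀ +ᵥ d) ≤ simSup A (c +ᵥ d) + dist (c₀ +ᵥ d) (c +ᵥ d) :=
          simSup_le_add_dist hAb _ _
      _ = simSup A (c +ᵥ d) + dist c₀ c := by simp only [vadd_eq_add, dist_add_right]
      _ < simDist A C + δ₀ := by linarith
      _ ≤ simDist A (c₀ +ᵥ D) + δ₀ := by gcongr; exact simDist_anti A hD.1.nonempty.vadd_set hsub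
  obtain ⟨y, hy, w, hw, hyw : y + w = c₀ + d⟩ := hδ₀W hmem
  refine ⟨y, simBest_subset_simBest hsub hdist hy, w + (c - c₀), hWV w hw _ hcW, ?_⟩
  calc y + (w + (c - c₀)) = (y + w) + (c - c₀) := (add_assoc _ _ _).symm
    _ = c + d := by rw [hyw]; abel

lemma eventually_vadd_inter_simBestApprox_subset
    (hD : SimWeakStronglyProximinal D) (hA : A.Nonempty) (hAb : Bornology.IsBounded A)
    (hV : V ∈ 𝓝 (0 : WeakSpace ℝ X)) (hsub : c₀ +ᵥ D ⊆ C) :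
    ∀ᶠ p : ℝ × X in 𝓝 (0, c₀), (p.2 +ᵥ D) ∩ simBestApprox A C p.1 ⊆ simBest A C + V := by
  rcases le_or_gt (simDist A (c₀ +ᵥ D)) (simDist A C) with hle | hlt
  · exact hD.eventually_vadd_inter_simBestApprox_subset_of_simDist_le hA hAb hV hsub hle
  · filter_upwards [eventually_disjoint_vadd_simBestApprox hAb hD.1.nonempty hlt] with p hp
    exact hp.inter_eq ▸ Set.empty_subset _

end SimWeakStronglyProximinal

theorem compact_add_simWeakStronglyProximinal_general {C D : Set X} (hCne : C.Nonempty)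
    (hC : IsCompact C) (hD : SimWeakStronglyProximinal D) :
    SimWeakStronglyProximinal (C + D) := by
  refine ⟨hD.1.compact_add hC hCne, fun A hA hAb V hV => ?_⟩
  have hunif : ∀ᶠ δ : ℝ in 𝓝 0, ∀ c ∈ C,
      (c +ᵥ D) ∩ simBestApprox A (C + D) δ ⊆ simBest A (C + D) + V :=
    hC.eventually_forall_of_forall_eventually fun c hc =>
      hD.eventually_vadd_inter_simBestApprox_subset hA hAb hV (Set.vadd_set_subset_add hc)
  obtain ⟨δ, hδ, hpos⟩ :=
    ((hunif.filter_mono nhdsWithin_le_nhds).and (self_mem_nhdsWithin (s := Set.Ioi 0))).exists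
  refine ⟨δ, hpos, fun y hy => ?_⟩
  obtain ⟨c, hc, d, hd, rfl⟩ := hy.1
  exact hδ c hc ⟨Set.vadd_mem_vadd_set hd, hy⟩

/-- The sum of a compact convex set and a simultaneously weakly strongly proximinal convex set
is simultaneously weakly strongly proximinal. -/
theorem compact_add_simWeakStronglyProximinal [CompleteSpace X]
    (C D : Set X) (hCne : C.Nonempty) (hDne : D.Nonempty)
    (hCc : Convex ℝ C) (hDc : Convex ℝ D)
    (hC : IsCompact C) (hD : SimWeakStronglyProximinal D) :
    SimWeakStronglyProximinal (C + D) :=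
  compact_add_simWeakStronglyProximinal_general hCne hC hD
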